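/- Let β > 2, ρ > 0, 0 < κ < 1/2 with 2κ < ρ, and assume α_N·p(N) = N^{−ρ} where p(N) ∈ (0,1]. If there exists δ ∈ (0,1) such that ∑_{N=1}^∞ exp(−(δ²/6)·N·p(N)) < ∞, then for P-almost every realization of ε, μ^ε_{N,α_N,β}((m₁(σ), m₂(σ)) ∉ A_κ^N) → 0 as N → ∞ through even integers. -/

import Mathlib

open MeasureTheory Filter

noncomputable section

/-- The spin value ±1 associated to a Boolean. -/
def spinVal (s : Bool) : ℝ := if s then 1 else -1

/-- A spin configuration on `N = 2n` sites, split into the two blocks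
`B₁` (first component) and `B₂` (second component); the perfect matching
pairs the `i`-th spin of `B₁` with the `i`-th spin of `B₂`. -/
abbrev TwoConf (n : ℕ) := (Fin n → Bool) × (Fin n → Bool)

/-- Block magnetization `m₁(σ) = (2/N) ∑_{i ∈ B₁} σᵢ` with `N = 2n`. -/
def mag1 (n : ℕ) (σ : TwoConf n) : ℝ := (2 / (2 * n : ℝ)) * ∑ i, spinVal (σ.1 i)

/-- Block magnetization `m₂(σ) = (2/N) ∑_{i ∈ B₂} σᵢ` with `N = 2n`. -/
def mag2 (n : ℕ) (σ : TwoConf n) : ℝ := (2 / (2 * n : ℝ)) * ∑ i, spinVal (σ.2 i)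

/-- The diluted Hamiltonian
`H^ε_{N,α,β}(σ) = −(β/(2N))(∑_{i,j∈B₁} σᵢσⱼ + ∑_{i,j∈B₂} σᵢσⱼ)
  − α ∑_{i∈B₁} ε_i σᵢ σ_{i+N/2}` with `N = 2n`. -/
def dilH (n : ℕ) (α β : ℝ) (ε : Fin n → Bool) (σ : TwoConf n) : ℝ :=
  -(β / (2 * (2 * n : ℝ))) *
      ((∑ i, ∑ j, spinVal (σ.1 i) * spinVal (σ.1 j)) +
        ∑ i, ∑ j, spinVal (σ.2 i) * spinVal (σ.2 j))
    - α * ∑ i, (if ε i then (1 : ℝ) else 0) * (spinVal (σ.1 i) * spinVal (σ.2 i))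

/-- The distribution of the magnetization vector `(m₁, m₂)` under the quenched Gibbs
measure `μ^ε_{N,α,β}`, i.e. the pushforward of `μ^ε_{N,α,β}` under `σ ↦ (m₁(σ), m₂(σ))`. -/
def dilMagDist (n : ℕ) (α β : ℝ) (ε : Fin n → Bool) : Measure (ℝ × ℝ) :=
  (∑ σ : TwoConf n, ENNReal.ofReal (Real.exp (-dilH n α β ε σ)))⁻¹ •
    ∑ σ : TwoConf n,
      ENNReal.ofReal (Real.exp (-dilH n α β ε σ)) • Measure.dirac (mag1 n σ, mag2 n σ)

/-- The law of the i.i.d. Bernoulli(q) dilution variables `(ε_i)_{i ∈ B₁}`. -/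
def bernMeasure (n : ℕ) (q : ℝ) : Measure (Fin n → Bool) :=
  ∑ ε : Fin n → Bool,
    ENNReal.ofReal (∏ i, if ε i then q else 1 - q) • Measure.dirac ε

/-- Membership in the typical set `A_κ^N ⊆ [−1,1]²`: the union over sign choices
`s₁, s₂ ∈ {+,−}` of the open squares of half-width `N^{−κ}` centered at
`(m^{s₁}(β/2), m^{s₂}(β/2))`, where `mp = m⁺(β/2)` and `m⁻(β/2) = −mp`. -/
def memTyp (mp κ : ℝ) (N : ℕ) (x : ℝ × ℝ) : Prop :=
  ∃ s₁ s₂ : Bool,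
    |x.1 - (if s₁ then mp else -mp)| < (N : ℝ) ^ (-κ) ∧
    |x.2 - (if s₂ then mp else -mp)| < (N : ℝ) ^ (-κ)

/-!
For a single Curie–Weiss block, replacing the exponent `γ m² / 2` per spin by its tangent line at
`m = x` bounds it from below, by convexity, and is exact where the magnetization equals `x`. The
linearized spins are independent, with partition function `exp (n * cwExponent γ x)`. As the
magnetization takes at most `n + 1` values, the Gibbs probability that it lies in a given set is at
most `(n + 1) exp (-n d)`, where `d` is the gap between the maximum of `cwExponent γ` and its
supremum over that set. On `[0, ∞)` the derivative of `cwExponent γ` is strictly concave, so the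
functional has quadratic maxima at `±m⁺(γ)`, and a deviation `N^{-κ}` from them has probability at
most of order `N exp (-c N^{1 - 2κ})`.

The interaction between the blocks changes the energy by at most `|α| ∑ ε_i`, hence Gibbs
probabilities by a factor of at most `exp (2 |α| ∑ ε_i)`. By the Chernoff bound and the
Borel–Cantelli lemma, `∑ ε_i = O(N p(N))` almost surely, so this factor is
`exp (O(N^{1 - ρ})) = exp (o(N^{1 - 2κ}))`, which the concentration of the blocks absorbs.
-/

open Asymptotics ProbabilityTheory Set Topology

/-! ### Quadratic maxima of functions with a concave derivative -/

lemma le_of_hasDerivAt_mul_sub_nonpos {f f' : ℝ → ℝ} {s : Set ℝ} {m x : ℝ}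
    (hs : s.OrdConnected) (hm : m ∈ s) (hx : x ∈ s)
    (hf : ∀ t ∈ s, HasDerivAt f (f' t) t) (hf' : ∀ t ∈ s, f' t * (t - m) ≤ 0) : f x ≤ f m := by
  have slope_eq {a b : ℝ} (ha : a ∈ s) (hb : b ∈ s) (hab : a < b) :
      ∃ t ∈ Ioo a b, t ∈ s ∧ f b - f a = f' t * (b - a) := by
    obtain ⟨t, ht, hslope⟩ := exists_hasDerivAt_eq_slope f f' hab
      (fun t ht => (hf t (hs.out ha hb ht)).continuousAt.continuousWithinAt)
      (fun t ht => hf t (hs.out ha hb (Ioo_subset_Icc_self ht)))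
    refine ⟨t, ht, hs.out ha hb (Ioo_subset_Icc_self ht), ?_⟩
    rw [hslope, div_mul_cancel₀ _ (sub_pos.2 hab).ne']
  rcases lt_trichotomy x m with hxm | rfl | hmx
  · obtain ⟨t, ht, hts, heq⟩ := slope_eq hx hm hxm
    have : 0 ≤ f' t := nonneg_of_mul_nonpos_left (hf' t hts) (by linarith [ht.2])
    nlinarith
  · rfl
  · obtain ⟨t, ht, hts, heq⟩ := slope_eq hm hx hmx
    have : f' t ≤ 0 := nonpos_of_mul_nonpos_left (hf' t hts) (by linarith [ht.1])
    nlinarith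

lemma mul_sub_le_neg_slope_mul_sq_of_concaveOn {f : ℝ → ℝ} {s : Set ℝ} {m y x : ℝ}
    (hf : ConcaveOn ℝ s f) (hm : m ∈ s) (hfm : f m = 0) (hy : y ∈ s) (hym : y < m) (hx : x ∈ s)
    (hyx : y ≤ x) :
    f x * (x - m) ≤ -(f y / (m - y)) * (x - m) ^ 2 := by
  rcases eq_or_ne x m with rfl | hxm
  · simp
  have hslope : f x / (x - m) ≤ -(f y / (m - y)) := by
    simpa [slope_def_field, hfm, ← div_neg] using
      hf.slope_anti hm ⟨hy, hym.ne⟩ ⟨hx, hxm⟩ hyx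
  calc f x * (x - m) = f x / (x - m) * (x - m) ^ 2 := by
        field_simp [sub_ne_zero.2 hxm]
    _ ≤ _ := by gcongr

lemma exists_le_sub_mul_sq_of_strictConcaveOn_deriv {G f : ℝ → ℝ} {a m : ℝ} (ham : a < m)
    (hG : ∀ x ∈ Ici a, HasDerivAt G (f x) x) (hf : StrictConcaveOn ℝ (Ici a) f)
    (hfa : f a = 0) (hfm : f m = 0) :
    ∃ c > 0, ∀ x ∈ Ici a, G x ≤ G m - c * (x - m) ^ 2 := by
  obtain ⟨y, hay, hym, hmid⟩ : ∃ y, a < y ∧ y < m ∧ m - a = 2 * (m - y) :=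
    ⟨(a + m) / 2, by linarith, by linarith, by ring⟩
  have hfy : 0 < f y := by
    simpa [hfa, hfm] using hf.lt_on_openSegment self_mem_Ici (mem_Ici.2 ham.le) ham.ne
      (openSegment_eq_Ioo ham ▸ ⟨hay, hym⟩)
  set k := f y / (m - y)
  have hk : 0 < k := div_pos hfy (sub_pos.2 hym)
  have hright (x : ℝ) (hx : y ≤ x) : G x ≤ G m - k / 2 * (x - m) ^ 2 := by
    have hK := le_of_hasDerivAt_mul_sub_nonpos (f := fun t => G t + k / 2 * (t - m) ^ 2)
      (f' := fun t => f t + k * (t - m)) ordConnected_Ici (mem_Ici.2 hym.le) (mem_Ici.2 hx)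
      (fun t ht => ?_) (fun t ht => ?_)
    · simp only [sub_self] at hK
      linarith
    · refine ((hG t (hay.le.trans ht)).add
        ((((hasDerivAt_id t).sub_const m).pow 2).const_mul (k / 2))).congr_deriv ?_
      simp only [id_eq]
      ring
    · have := mul_sub_le_neg_slope_mul_sq_of_concaveOn hf.concaveOn (mem_Ici.2 ham.le) hfm
        (mem_Ici.2 hay.le) hym (mem_Ici.2 (hay.le.trans ht)) ht
      linarith
  have hleft (x : ℝ) (hx : x ∈ Icc a y) : G x ≤ G y := by
    refine le_of_hasDerivAt_mul_sub_nonpos ordConnected_Icc (right_mem_Icc.2 hay.le) hx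
      (fun t ht => hG t ht.1) (fun t ht => mul_nonpos_of_nonneg_of_nonpos ?_ (by linarith [ht.2]))
    simpa [hfa, hfm] using hf.concaveOn.min_le_of_mem_Icc self_mem_Ici (mem_Ici.2 ham.le)
      ⟨ht.1, ht.2.trans hym.le⟩
  refine ⟨k / 8, by positivity, fun x hx => ?_⟩
  rcases le_total x y with hxy | hyx
  · have hdist : (x - m) ^ 2 ≤ 4 * (y - m) ^ 2 := by
      have : a ≤ x := hx
      nlinarith
    nlinarith [hleft x ⟨hx, hxy⟩, hright y le_rfl]
  · nlinarith [hright x hyx, mul_nonneg hk.le (sq_nonneg (x - m))]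

/-! ### The Curie–Weiss exponent -/

lemma hasDerivAt_tanh (x : ℝ) : HasDerivAt Real.tanh (1 / Real.cosh x ^ 2) x := by
  have hquot := (Real.hasDerivAt_sinh x).div (Real.hasDerivAt_cosh x) (Real.cosh_pos x).ne'
  rw [show Real.tanh = Real.sinh / Real.cosh from funext Real.tanh_eq_sinh_div_cosh]
  refine hquot.congr_deriv ?_
  rw [← Real.cosh_sq_sub_sinh_sq x]
  ring

/-- The Curie–Weiss free-energy functional at inverse temperature `γ` (normalized so that
criticality is at `γ = 1`): `exp (n * cwExponent γ x)` is the partition function of `n` spins whose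
mean-field exponent `γ * m ^ 2 / 2` per spin is replaced by its tangent line at `m = x`. The
critical points of the functional are the solutions of `x = tanh (γ * x)`. -/
def cwExponent (γ x : ℝ) : ℝ := Real.log (2 * Real.cosh (γ * x)) - γ * x ^ 2 / 2

lemma cwExponent_abs (γ x : ℝ) : cwExponent γ |x| = cwExponent γ x := by
  rcases abs_choice x with h | h <;> simp [cwExponent, h, Real.cosh_neg]

lemma hasDerivAt_tanh_mul_sub (γ x : ℝ) :
    HasDerivAt (fun x => Real.tanh (γ * x) - x) (γ / Real.cosh (γ * x) ^ 2 - 1) x := by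
  refine (((hasDerivAt_tanh (γ * x)).comp x ((hasDerivAt_id x).const_mul γ)).sub
    (hasDerivAt_id x)).congr_deriv ?_
  ring

lemma hasDerivAt_cwExponent (γ x : ℝ) :
    HasDerivAt (cwExponent γ) (γ * (Real.tanh (γ * x) - x)) x := by
  have hcosh : Real.cosh (γ * x) ≠ 0 := (Real.cosh_pos _).ne'
  refine (((((hasDerivAt_id x).const_mul γ).cosh.const_mul 2).log (by positivity)).sub
    ((((hasDerivAt_id x).pow 2).const_mul γ).div_const 2)).congr_deriv ?_
  rw [Real.tanh_eq_sinh_div_cosh]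
  simp only [id_eq]
  field_simp
  ring

lemma strictConcaveOn_mul_tanh_mul_sub {γ : ℝ} (hγ : 0 < γ) :
    StrictConcaveOn ℝ (Ici 0) (fun x => γ * (Real.tanh (γ * x) - x)) := by
  have hderiv (x : ℝ) := (hasDerivAt_tanh_mul_sub γ x).const_mul γ
  refine StrictAntiOn.strictConcaveOn_of_deriv (convex_Ici 0)
    (fun x _ => (hderiv x).continuousAt.continuousWithinAt) fun x hx y hy hxy => ?_
  rw [interior_Ici, mem_Ioi] at hx hy
  rw [(hderiv x).deriv, (hderiv y).deriv]
  have hcosh : Real.cosh (γ * x) < Real.cosh (γ * y) := by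
    rw [Real.cosh_lt_cosh, abs_of_pos (by positivity), abs_of_pos (by positivity)]
    gcongr
  have := Real.cosh_pos (γ * x)
  gcongr

lemma pos_of_mem_upperBounds_tanh_fixedPoints {γ m : ℝ} (hγ : 1 < γ)
    (hm : m ∈ upperBounds {z | z = Real.tanh (γ * z)}) : 0 < m := by
  have hderiv (x : ℝ) := hasDerivAt_tanh_mul_sub γ x
  obtain ⟨x, hfx, hx0, hx1⟩ : ∃ x, 0 < Real.tanh (γ * x) - x ∧ 0 < x ∧ x < 1 := by
    have hsign := eventually_nhdsWithin_sign_eq_of_deriv_pos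
      (f := fun x => Real.tanh (γ * x) - x) (x₀ := 0)
      (by rw [(hderiv 0).deriv]; simpa using hγ) (by simp)
    obtain ⟨x, hx, hx01⟩ := ((hsign.filter_mono nhdsWithin_le_nhds).and
      (Ioo_mem_nhdsGT one_pos)).exists
    refine ⟨x, ?_, hx01⟩
    rwa [sub_zero, sign_pos hx01.1, sign_eq_one_iff] at hx
  have hf1 : Real.tanh (γ * 1) - 1 ≤ 0 := by linarith [Real.tanh_lt_one (γ * 1)]
  obtain ⟨z, hz, hfz⟩ := intermediate_value_Icc' hx1.le
    (fun t _ => (hderiv t).continuousAt.continuousWithinAt) ⟨hf1, hfx.le⟩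
  calc 0 < x := hx0
    _ ≤ z := hz.1
    _ ≤ m := hm (sub_eq_zero.1 hfz).symm

lemma exists_cwExponent_le_sub_mul_sq {γ m : ℝ} (hγ : 1 < γ)
    (hm : IsGreatest {z | z = Real.tanh (γ * z)} m) :
    ∃ c > 0, ∀ x, cwExponent γ x ≤ cwExponent γ m - c * (|x| - m) ^ 2 := by
  have hfm : m = Real.tanh (γ * m) := hm.1
  obtain ⟨c, hc, hle⟩ := exists_le_sub_mul_sq_of_strictConcaveOn_deriv
    (pos_of_mem_upperBounds_tanh_fixedPoints hγ hm.2) (fun x _ => hasDerivAt_cwExponent γ x)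
    (strictConcaveOn_mul_tanh_mul_sub (one_pos.trans hγ)) (by simp) (by simp [← hfm])
  exact ⟨c, hc, fun x => cwExponent_abs γ x ▸ hle |x| (abs_nonneg x)⟩

/-! ### Block magnetizations and Curie–Weiss weights -/

section Block

variable {ι : Type*} [Fintype ι]

/-- The magnetization of a block of spins indexed by `ι`; `mag1` and `mag2` are the
magnetizations of the two components of a `TwoConf`. -/
def blockMag (τ : ι → Bool) : ℝ := (∑ i, spinVal (τ i)) / Fintype.card ι

/-- The unnormalized Curie–Weiss weight of a block configuration, with the inverse temperature `γ`
normalized as in `cwExponent`; the blocks of `dilH` have `γ = β / 2`. -/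
def cwWeight (γ : ℝ) (τ : ι → Bool) : ℝ :=
  Real.exp (Fintype.card ι * (γ * blockMag τ ^ 2 / 2))

lemma cwWeight_pos (γ : ℝ) (τ : ι → Bool) : 0 < cwWeight γ τ := Real.exp_pos _

lemma card_mul_blockMag (τ : ι → Bool) :
    Fintype.card ι * blockMag τ = ∑ i, spinVal (τ i) := by
  refine mul_div_cancel_of_imp' fun h => ?_
  have : IsEmpty ι := Fintype.card_eq_zero_iff.1 (by exact_mod_cast h)
  exact Finset.sum_of_isEmpty _

lemma card_image_blockMag_le (F : Finset (ι → Bool)) :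
    (F.image blockMag).card ≤ Fintype.card ι + 1 := by
  have hval (τ : ι → Bool) :
      blockMag τ = (2 * (Finset.univ.filter (τ ·)).card - Fintype.card ι) / Fintype.card ι := by
    have hspin (b : Bool) : spinVal b = 2 * (if b then 1 else 0) - 1 := by
      cases b <;> norm_num [spinVal]
    simp only [blockMag, hspin, Finset.sum_sub_distrib, ← Finset.mul_sum, Finset.sum_boole]
    simp
  calc (F.image blockMag).card
      ≤ ((Finset.range (Fintype.card ι + 1)).image
          fun k : ℕ => ((2 * k - Fintype.card ι) / Fintype.card ι : ℝ)).card := by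
        refine Finset.card_le_card fun x hx => ?_
        obtain ⟨τ, -, rfl⟩ := Finset.mem_image.1 hx
        exact Finset.mem_image.2 ⟨_, Finset.mem_range.2 (Nat.lt_succ_of_le (Finset.card_le_univ _)),
          (hval τ).symm⟩
    _ ≤ Fintype.card ι + 1 := Finset.card_image_le.trans_eq (Finset.card_range _)

lemma sum_exp_mul_sum_spinVal [DecidableEq ι] (h : ℝ) :
    ∑ τ : ι → Bool, Real.exp (h * ∑ i, spinVal (τ i)) = (2 * Real.cosh h) ^ Fintype.card ι := by
  simp_rw [Finset.mul_sum, Real.exp_sum]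
  rw [← Fintype.prod_sum fun (_ : ι) b => Real.exp (h * spinVal b)]
  simp [spinVal, Real.cosh_eq, mul_div_cancel₀]

lemma sum_exp_tilt [DecidableEq ι] (γ x : ℝ) :
    ∑ τ : ι → Bool, Real.exp (Fintype.card ι * (γ * x * blockMag τ - γ * x ^ 2 / 2))
      = Real.exp (Fintype.card ι * cwExponent γ x) := by
  have hcosh : 0 < 2 * Real.cosh (γ * x) := by have := Real.cosh_pos (γ * x); positivity
  have htilt (τ : ι → Bool) :
      Real.exp (Fintype.card ι * (γ * x * blockMag τ - γ * x ^ 2 / 2))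
        = Real.exp (γ * x * ∑ i, spinVal (τ i))
          * Real.exp (-(Fintype.card ι * (γ * x ^ 2 / 2))) := by
    rw [← card_mul_blockMag, ← Real.exp_add]
    ring_nf
  simp_rw [htilt]
  rw [← Finset.sum_mul, sum_exp_mul_sum_spinVal, cwExponent, mul_sub, sub_eq_add_neg,
    Real.exp_add, Real.exp_nat_mul, Real.exp_log hcosh]

lemma exp_card_mul_cwExponent_le_sum_cwWeight [DecidableEq ι] {γ : ℝ} (hγ : 0 ≤ γ) (x : ℝ) :
    Real.exp (Fintype.card ι * cwExponent γ x) ≤ ∑ τ : ι → Bool, cwWeight γ τ := by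
  rw [← sum_exp_tilt]
  refine Finset.sum_le_sum fun τ _ => Real.exp_le_exp.2 ?_
  gcongr
  nlinarith [mul_nonneg hγ (sq_nonneg (x - blockMag τ))]

-- On the level set `blockMag τ = x` the tilt by `x` is exact, so the weight of each of the at
-- most `card ι + 1` level sets is at most the full tilted sum.
lemma sum_cwWeight_le {γ g : ℝ} {F : Finset (ι → Bool)}
    (hF : ∀ τ ∈ F, cwExponent γ (blockMag τ) ≤ g) :
    ∑ τ ∈ F, cwWeight γ τ ≤ (Fintype.card ι + 1) * Real.exp (Fintype.card ι * g) := by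
  classical
  have hlevel : ∀ x ∈ F.image blockMag,
      ∑ τ ∈ F with blockMag τ = x, cwWeight γ τ ≤ Real.exp (Fintype.card ι * g) := by
    intro x hx
    obtain ⟨τ₀, hτ₀, rfl⟩ := Finset.mem_image.1 hx
    calc ∑ τ ∈ F with blockMag τ = blockMag τ₀, cwWeight γ τ
        = ∑ τ ∈ F with blockMag τ = blockMag τ₀, Real.exp (Fintype.card ι *
            (γ * blockMag τ₀ * blockMag τ - γ * blockMag τ₀ ^ 2 / 2)) := by
          refine Finset.sum_congr rfl fun τ hτ => ?_
          rw [cwWeight, (Finset.mem_filter.1 hτ).2]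
          ring_nf
      _ ≤ Real.exp (Fintype.card ι * cwExponent γ (blockMag τ₀)) := by
          rw [← sum_exp_tilt]
          exact Finset.sum_le_univ_sum_of_nonneg fun τ => (Real.exp_pos _).le
      _ ≤ Real.exp (Fintype.card ι * g) := by
          gcongr
          exact hF τ₀ hτ₀
  calc ∑ τ ∈ F, cwWeight γ τ
      = ∑ x ∈ F.image blockMag, ∑ τ ∈ F with blockMag τ = x, cwWeight γ τ :=
        (Finset.sum_fiberwise_of_maps_to (fun _ => Finset.mem_image_of_mem _) _).symm
    _ ≤ (F.image blockMag).card • Real.exp (Fintype.card ι * g) :=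
        Finset.sum_le_card_nsmul _ _ _ hlevel
    _ ≤ (Fintype.card ι + 1) * Real.exp (Fintype.card ι * g) := by
        rw [nsmul_eq_mul]
        gcongr
        exact_mod_cast card_image_blockMag_le F

lemma sum_cwWeight_div_sum_le [DecidableEq ι] {γ x d : ℝ} (hγ : 0 ≤ γ)
    {F : Finset (ι → Bool)}
    (hF : ∀ τ ∈ F, cwExponent γ (blockMag τ) ≤ cwExponent γ x - d) :
    (∑ τ ∈ F, cwWeight γ τ) / ∑ τ : ι → Bool, cwWeight γ τ
      ≤ (Fintype.card ι + 1) * Real.exp (-(Fintype.card ι * d)) := by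
  have hZ : 0 < ∑ τ : ι → Bool, cwWeight γ τ :=
    Finset.sum_pos (fun τ _ => cwWeight_pos γ τ) Finset.univ_nonempty
  rw [div_le_iff₀ hZ]
  calc ∑ τ ∈ F, cwWeight γ τ
      ≤ (Fintype.card ι + 1) * Real.exp (Fintype.card ι * (cwExponent γ x - d)) :=
        sum_cwWeight_le hF
    _ = (Fintype.card ι + 1) * Real.exp (-(Fintype.card ι * d))
          * Real.exp (Fintype.card ι * cwExponent γ x) := by
        rw [mul_assoc, ← Real.exp_add]
        ring_nf
    _ ≤ _ := by
        gcongr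
        exact exp_card_mul_cwExponent_le_sum_cwWeight hγ x

end Block

/-! ### Normalized finite sums -/

section NormalizedSum

variable {ι : Type*} [Fintype ι] [Nonempty ι] {u : ι → ℝ}

lemma sum_mul_exp_div_sum_le (hu : ∀ i, 0 < u i) {v : ι → ℝ} {D : ℝ} (hv : ∀ i, |v i| ≤ D)
    (T : Finset ι) :
    (∑ i ∈ T, u i * Real.exp (v i)) / ∑ i, u i * Real.exp (v i)
      ≤ Real.exp (2 * D) * ((∑ i ∈ T, u i) / ∑ i, u i) := by
  have hsum : 0 < ∑ i, u i := Finset.sum_pos (fun i _ => hu i) Finset.univ_nonempty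
  have hT : 0 ≤ ∑ i ∈ T, u i := Finset.sum_nonneg fun i _ => (hu i).le
  have hnum : ∑ i ∈ T, u i * Real.exp (v i) ≤ (∑ i ∈ T, u i) * Real.exp D := by
    rw [Finset.sum_mul]
    gcongr with i
    · exact (hu i).le
    · exact (abs_le.1 (hv i)).2
  have hden : (∑ i, u i) * Real.exp (-D) ≤ ∑ i, u i * Real.exp (v i) := by
    rw [Finset.sum_mul]
    gcongr with i
    · exact (hu i).le
    · exact (abs_le.1 (hv i)).1
  calc (∑ i ∈ T, u i * Real.exp (v i)) / ∑ i, u i * Real.exp (v i)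
      ≤ ((∑ i ∈ T, u i) * Real.exp D) / ((∑ i, u i) * Real.exp (-D)) := by gcongr
    _ = Real.exp (2 * D) * ((∑ i ∈ T, u i) / ∑ i, u i) := by
        rw [Real.exp_neg, two_mul, Real.exp_add]
        field_simp

lemma sum_mul_div_sum_le_two_mul (hu : ∀ i, 0 < u i) {F : Finset ι}
    {T : Finset (ι × ι)} (hT : ∀ i ∈ T, i.1 ∈ F ∨ i.2 ∈ F) :
    (∑ i ∈ T, u i.1 * u i.2) / ∑ i : ι × ι, u i.1 * u i.2
      ≤ 2 * ((∑ i ∈ F, u i) / ∑ i, u i) := by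
  classical
  have hsum : 0 < ∑ i, u i := Finset.sum_pos (fun i _ => hu i) Finset.univ_nonempty
  have hmul (i : ι × ι) : 0 ≤ u i.1 * u i.2 := (mul_pos (hu _) (hu _)).le
  have hcover : T ⊆ F ×ˢ Finset.univ ∪ Finset.univ ×ˢ F := fun i hi => by
    simpa using hT i hi
  have hnum : ∑ i ∈ T, u i.1 * u i.2 ≤ 2 * ((∑ i ∈ F, u i) * ∑ i, u i) :=
    calc ∑ i ∈ T, u i.1 * u i.2
        ≤ ∑ i ∈ F ×ˢ Finset.univ ∪ Finset.univ ×ˢ F, u i.1 * u i.2 :=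
          Finset.sum_le_sum_of_subset_of_nonneg hcover fun i _ _ => hmul i
      _ ≤ ∑ i ∈ F ×ˢ Finset.univ, u i.1 * u i.2 + ∑ i ∈ Finset.univ ×ˢ F, u i.1 * u i.2 := by
          rw [← Finset.sum_union_inter]
          exact le_add_of_nonneg_right (Finset.sum_nonneg fun i _ => hmul i)
      _ = 2 * ((∑ i ∈ F, u i) * ∑ i, u i) := by
          rw [Finset.sum_product, Finset.sum_product, ← Finset.sum_mul_sum, ← Finset.sum_mul_sum]
          ring
  calc (∑ i ∈ T, u i.1 * u i.2) / ∑ i : ι × ι, u i.1 * u i.2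
      ≤ 2 * ((∑ i ∈ F, u i) * ∑ i, u i) / ((∑ i, u i) * ∑ i, u i) := by
        rw [Fintype.sum_prod_type, ← Finset.sum_mul_sum]
        gcongr
    _ = 2 * ((∑ i ∈ F, u i) / ∑ i, u i) := by
        field_simp

end NormalizedSum

/-! ### The diluted Gibbs measure -/

/-- The number `∑ i, ε_i` of pairs of spins whose interaction is switched on. -/
def openCount {n : ℕ} (ε : Fin n → Bool) : ℝ := ∑ i, if ε i then 1 else 0

lemma openCount_nonneg {n : ℕ} (ε : Fin n → Bool) : 0 ≤ openCount ε :=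
  Finset.sum_nonneg fun i _ => by split_ifs <;> norm_num

/-- The coupling between the two blocks, the term of `-dilH` in which the dilution enters. -/
def coupling {n : ℕ} (α : ℝ) (ε : Fin n → Bool) (σ : TwoConf n) : ℝ :=
  α * ∑ i, (if ε i then 1 else 0) * (spinVal (σ.1 i) * spinVal (σ.2 i))

lemma abs_coupling_le {n : ℕ} (α : ℝ) (ε : Fin n → Bool) (σ : TwoConf n) :
    |coupling α ε σ| ≤ |α| * openCount ε := by
  rw [coupling, abs_mul, openCount]
  gcongr
  refine (Finset.abs_sum_le_sum_abs _ _).trans (Finset.sum_le_sum fun i _ => ?_)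
  unfold spinVal
  split_ifs <;> norm_num

lemma mag1_eq_blockMag {n : ℕ} (σ : TwoConf n) : mag1 n σ = blockMag σ.1 := by
  rw [mag1, blockMag, Fintype.card_fin, div_mul_eq_div_div, div_self two_ne_zero,
    one_div_mul_eq_div]

lemma mag2_eq_blockMag {n : ℕ} (σ : TwoConf n) : mag2 n σ = blockMag σ.2 :=
  mag1_eq_blockMag σ.swap

lemma exp_neg_dilH {n : ℕ} (α β : ℝ) (ε : Fin n → Bool) (σ : TwoConf n) :
    Real.exp (-dilH n α β ε σ)
      = cwWeight (β / 2) σ.1 * cwWeight (β / 2) σ.2 * Real.exp (coupling α ε σ) := by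
  rw [cwWeight, cwWeight, ← Real.exp_add, ← Real.exp_add, dilH, coupling]
  simp_rw [← Finset.mul_sum, ← Finset.sum_mul, ← card_mul_blockMag, Fintype.card_fin]
  congr 1
  rcases n.eq_zero_or_pos with rfl | _
  · simp
  · field_simp
    ring

lemma dilMagDist_apply (n : ℕ) (α β : ℝ) (ε : Fin n → Bool) (A : Set (ℝ × ℝ))
    [DecidablePred (· ∈ A)] :
    dilMagDist n α β ε A = ENNReal.ofReal
      ((∑ σ : TwoConf n with (mag1 n σ, mag2 n σ) ∈ A, Real.exp (-dilH n α β ε σ)) /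
        ∑ σ : TwoConf n, Real.exp (-dilH n α β ε σ)) := by
  have hsum : 0 < ∑ σ : TwoConf n, Real.exp (-dilH n α β ε σ) :=
    Finset.sum_pos (fun σ _ => Real.exp_pos _) Finset.univ_nonempty
  rw [ENNReal.ofReal_div_of_pos hsum, div_eq_mul_inv, mul_comm,
    ENNReal.ofReal_sum_of_nonneg fun σ _ => (Real.exp_pos _).le,
    ENNReal.ofReal_sum_of_nonneg fun σ _ => (Real.exp_pos _).le, dilMagDist, Measure.smul_apply,
    Measure.finsetSum_apply, smul_eq_mul, Finset.sum_filter]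
  simp [Set.indicator_apply]

lemma le_abs_abs_sub_of_not_memTyp {m κ : ℝ} {N : ℕ} {x : ℝ × ℝ} (hx : ¬ memTyp m κ N x) :
    (N : ℝ) ^ (-κ) ≤ |(|x.1|) - m| ∨ (N : ℝ) ^ (-κ) ≤ |(|x.2|) - m| := by
  have hsign (y : ℝ) : ∃ s : Bool, |y - (if s then m else -m)| = |(|y|) - m| := by
    rcases abs_choice y with h | h
    · exact ⟨true, by simp [h]⟩
    · refine ⟨false, ?_⟩
      rw [h, if_neg Bool.false_ne_true, ← neg_add', abs_neg, sub_neg_eq_add]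
  by_contra! hlt
  obtain ⟨s₁, hs₁⟩ := hsign x.1
  obtain ⟨s₂, hs₂⟩ := hsign x.2
  exact hx ⟨s₁, s₂, hs₁ ▸ hlt.1, hs₂ ▸ hlt.2⟩

lemma dilMagDist_not_memTyp_le {n N : ℕ} {β m c : ℝ} (hβ : 0 ≤ β) (hc : 0 ≤ c)
    (hexp : ∀ x, cwExponent (β / 2) x ≤ cwExponent (β / 2) m - c * (|x| - m) ^ 2)
    (α κ : ℝ) (ε : Fin n → Bool) :
    dilMagDist n α β ε {x | ¬ memTyp m κ N x} ≤ ENNReal.ofReal (2 * ((n + 1) *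
      Real.exp (2 * (|α| * openCount ε) - n * (c * ((N : ℝ) ^ (-κ)) ^ 2)))) := by
  classical
  set r : ℝ := (N : ℝ) ^ (-κ)
  have : 0 ≤ r := by positivity
  set F : Finset (Fin n → Bool) := Finset.univ.filter fun τ => r ≤ |(|blockMag τ|) - m|
  have hF : ∀ τ ∈ F, cwExponent (β / 2) (blockMag τ) ≤ cwExponent (β / 2) m - c * r ^ 2 := by
    intro τ hτ
    have hsq : r ^ 2 ≤ (|blockMag τ| - m) ^ 2 := by
      rw [← sq_abs (|blockMag τ| - m)]
      gcongr
      exact (Finset.mem_filter.1 hτ).2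
    nlinarith [hexp (blockMag τ)]
  rw [dilMagDist_apply]
  refine ENNReal.ofReal_le_ofReal ?_
  simp_rw [exp_neg_dilH]
  refine (sum_mul_exp_div_sum_le (fun σ => mul_pos (cwWeight_pos _ _) (cwWeight_pos _ _))
    (abs_coupling_le α ε) _).trans ?_
  grw [sum_mul_div_sum_le_two_mul (cwWeight_pos _) (F := F),
    sum_cwWeight_div_sum_le (by positivity) hF]
  · rw [Fintype.card_fin, sub_eq_add_neg, Real.exp_add]
    apply le_of_eq
    ring
  · intro σ hσ
    simpa [F, mag1_eq_blockMag, mag2_eq_blockMag] using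
      le_abs_abs_sub_of_not_memTyp (Finset.mem_filter.1 hσ).2

/-! ### Large deviations of the dilution -/

instance isFiniteMeasure_bernMeasure (n : ℕ) (q : ℝ) : IsFiniteMeasure (bernMeasure n q) :=
  ⟨by simp [bernMeasure]⟩

lemma mgf_openCount_bernMeasure (n : ℕ) {q : ℝ} (hq : q ∈ Icc 0 1) (t : ℝ) :
    mgf openCount (bernMeasure n q) t = (1 - q + q * Real.exp t) ^ n := by
  have hweight (ε : Fin n → Bool) : 0 ≤ ∏ i, if ε i then q else 1 - q :=
    Finset.prod_nonneg fun i _ => by split_ifs <;> linarith [hq.1, hq.2]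
  calc mgf openCount (bernMeasure n q) t
      = ∑ ε : Fin n → Bool, (∏ i, if ε i then q else 1 - q) * Real.exp (t * openCount ε) := by
        rw [mgf, bernMeasure, integral_finsetSum_measure fun ε _ =>
          (integrable_dirac (by simp)).smul_measure ENNReal.ofReal_ne_top]
        simp [integral_smul_measure, ENNReal.toReal_ofReal, hweight]
    _ = ∑ ε : Fin n → Bool, ∏ i, if ε i then q * Real.exp t else 1 - q := by
        refine Finset.sum_congr rfl fun ε _ => ?_
        rw [openCount, Finset.mul_sum, Real.exp_sum, ← Finset.prod_mul_distrib]
        refine Finset.prod_congr rfl fun i _ => ?_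
        split_ifs <;> simp
    _ = (1 - q + q * Real.exp t) ^ n := by
        refine (Fintype.prod_sum fun (_ : Fin n) (b : Bool) =>
          if b then q * Real.exp t else 1 - q).symm.trans ?_
        simp [add_comm]

lemma isProbabilityMeasure_bernMeasure (n : ℕ) {q : ℝ} (hq : q ∈ Icc 0 1) :
    IsProbabilityMeasure (bernMeasure n q) := by
  rw [isProbabilityMeasure_iff_real, ← mgf_zero', mgf_openCount_bernMeasure n hq]
  simp

lemma bernMeasure_real_le_openCount_le (n : ℕ) {q t : ℝ} (hq : q ∈ Icc 0 1) (ht : 0 ≤ t) (a : ℝ) :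
    (bernMeasure n q).real {ε | a ≤ openCount ε}
      ≤ Real.exp (-t * a + n * q * (Real.exp t - 1)) := by
  have hbase : 0 ≤ 1 - q + q * Real.exp t := by nlinarith [hq.1, hq.2, Real.exp_pos t]
  calc (bernMeasure n q).real {ε | a ≤ openCount ε}
      ≤ Real.exp (-t * a) * mgf openCount (bernMeasure n q) t :=
        measure_ge_le_exp_mul_mgf a ht .of_finite
    _ ≤ Real.exp (-t * a) * Real.exp (q * (Real.exp t - 1)) ^ n := by
        rw [mgf_openCount_bernMeasure n hq]
        gcongr
        linarith [Real.add_one_le_exp (q * (Real.exp t - 1))]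
    _ = Real.exp (-t * a + n * q * (Real.exp t - 1)) := by
        rw [← Real.exp_nat_mul, ← Real.exp_add, mul_assoc]

lemma ae_eventually_openCount_le {Ω : Type*} [MeasurableSpace Ω] {P : Measure Ω} {q : ℕ → ℝ}
    (hq : ∀ n, q n ∈ Icc 0 1) {E : Ω → (n : ℕ) → Fin n → Bool}
    (hlaw : ∀ n, P.map (fun ω => E ω n) = bernMeasure n (q n)) {b : ℝ}
    (hsum : Summable fun n : ℕ => Real.exp (-b * (n * q n))) :
    ∀ᵐ ω ∂P, ∀ᶠ n in atTop, openCount (E ω n) ≤ (b + Real.exp 1 - 1) * (n * q n) := by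
  have htail (n : ℕ) : P {ω | (b + Real.exp 1 - 1) * (n * q n) ≤ openCount (E ω n)}
      ≤ ENNReal.ofReal (Real.exp (-b * (n * q n))) := by
    have := isProbabilityMeasure_bernMeasure n (hq n)
    have hE : AEMeasurable (fun ω => E ω n) P :=
      .of_map_ne_zero (hlaw n ▸ IsProbabilityMeasure.ne_zero _)
    calc P {ω | (b + Real.exp 1 - 1) * (n * q n) ≤ openCount (E ω n)}
        = bernMeasure n (q n) {ε | (b + Real.exp 1 - 1) * (n * q n) ≤ openCount ε} := by
          rw [← hlaw, Measure.map_apply_of_aemeasurable hE (Set.toFinite _).measurableSet]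
          rfl
      _ ≤ ENNReal.ofReal (Real.exp (-b * (n * q n))) := by
          rw [← ofReal_measureReal]
          refine ENNReal.ofReal_le_ofReal
            ((bernMeasure_real_le_openCount_le n (hq n) zero_le_one _).trans_eq ?_)
          ring_nf
  filter_upwards [ae_eventually_notMem
    (ne_top_of_le_ne_top hsum.tsum_ofReal_ne_top (ENNReal.tsum_le_tsum htail))] with ω hω
  filter_upwards [hω] with n hn using (not_le.1 hn).le

/-! ### Concentration -/

lemma isLittleO_rpow_rpow {p q : ℝ} (hpq : p < q) :
    (fun x : ℝ => x ^ p) =o[atTop] fun x => x ^ q := by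
  refine isLittleO_of_tendsto' ?_ ?_
  · filter_upwards [eventually_gt_atTop 0] with x hx h
    exact absurd h (Real.rpow_pos_of_pos hx q).ne'
  · refine (tendsto_rpow_neg_atTop (sub_pos.2 hpq)).congr' ?_
    filter_upwards [eventually_gt_atTop 0] with x hx
    rw [neg_sub, Real.rpow_sub hx]

lemma tendsto_add_one_mul_exp_isLittleO_sub_rpow {D : ℕ → ℝ} {s c : ℝ} (hs : 0 < s) (hc : 0 < c)
    (hD : D =o[atTop] fun n : ℕ => (n : ℝ) ^ s) :
    Tendsto (fun n : ℕ => (n + 1) * Real.exp (D n - c * (n : ℝ) ^ s)) atTop (𝓝 0) := by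
  have hpow : Tendsto (fun n : ℕ => (n : ℝ) ^ s) atTop atTop :=
    (tendsto_rpow_atTop hs).comp tendsto_natCast_atTop_atTop
  have hlim : Tendsto (fun n : ℕ => 2 * (((n : ℝ) ^ s) ^ (1 / s) *
      Real.exp (-(c / 2) * (n : ℝ) ^ s))) atTop (𝓝 0) := by
    simpa using ((tendsto_rpow_mul_exp_neg_mul_atTop_nhds_zero (1 / s) (c / 2)
      (half_pos hc)).comp hpow).const_mul 2
  refine squeeze_zero' (.of_forall fun n => by positivity) ?_ hlim
  filter_upwards [hD.bound (half_pos hc), eventually_ge_atTop 1] with n hDn hn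
  have hn' : (1 : ℝ) ≤ n := by exact_mod_cast hn
  have hDn' : D n ≤ c / 2 * (n : ℝ) ^ s := by
    simpa [abs_of_nonneg, Real.rpow_nonneg] using (le_abs_self _).trans hDn
  calc (n + 1) * Real.exp (D n - c * (n : ℝ) ^ s)
      ≤ 2 * n * Real.exp (-(c / 2) * (n : ℝ) ^ s) := by
        gcongr <;> linarith
    _ = 2 * (((n : ℝ) ^ s) ^ (1 / s) * Real.exp (-(c / 2) * (n : ℝ) ^ s)) := by
        rw [one_div, Real.rpow_rpow_inv n.cast_nonneg hs.ne', mul_assoc]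

lemma tendsto_dilMagDist_not_memTyp {β κ m : ℝ} (hβ : 2 < β) (hκ : κ < 1 / 2)
    (hm : IsGreatest {z | z = Real.tanh (β / 2 * z)} m) {α : ℕ → ℝ} {ε : (n : ℕ) → Fin n → Bool}
    (hαε : (fun n => α n * openCount (ε n)) =o[atTop] fun n : ℕ => (n : ℝ) ^ (1 - 2 * κ)) :
    Tendsto (fun n => dilMagDist n (α n) β (ε n) {x | ¬ memTyp m κ (2 * n) x}) atTop (𝓝 0) := by
  obtain ⟨c, hc, hexp⟩ := exists_cwExponent_le_sub_mul_sq (by linarith) hm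
  have hD : (fun n => 2 * (|α n| * openCount (ε n))) =o[atTop]
      fun n : ℕ => (n : ℝ) ^ (1 - 2 * κ) := by
    simpa [abs_mul, abs_of_nonneg, openCount_nonneg] using hαε.abs_left.const_mul_left 2
  have hlim := (tendsto_add_one_mul_exp_isLittleO_sub_rpow (c := c * 2 ^ (-(2 * κ)))
    (by linarith) (by positivity) hD).const_mul 2
  rw [mul_zero] at hlim
  refine tendsto_of_tendsto_of_tendsto_of_le_of_le' tendsto_const_nhds
    (ENNReal.ofReal_zero ▸ ENNReal.tendsto_ofReal hlim) (.of_forall fun _ => bot_le) ?_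
  filter_upwards [eventually_gt_atTop 0] with n hn
  have hn' : (0 : ℝ) < n := by exact_mod_cast hn
  have hscale : (n : ℝ) * (c * (((2 * n : ℕ) : ℝ) ^ (-κ)) ^ 2)
      = c * 2 ^ (-(2 * κ)) * (n : ℝ) ^ (1 - 2 * κ) := by
    rw [← Real.rpow_mul_natCast (by positivity), Nat.cast_mul, Nat.cast_ofNat,
      Real.mul_rpow two_pos.le hn'.le, sub_eq_add_neg, Real.rpow_add hn', Real.rpow_one]
    ring_nf
  rw [← hscale]
  exact dilMagDist_not_memTyp_le (by linarith) hc.le hexp (α n) κ (ε n)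

theorem diluted_concentration_almost_surely_general {β κ mp : ℝ} (hβ : 2 < β) (hκ : κ < 1 / 2)
    (hmp : IsGreatest {z | z = Real.tanh (β / 2 * z)} mp)
    {α p : ℕ → ℝ} (hp : ∀ N, p N ∈ Icc 0 1)
    (hαp : (fun N => α N * p N) =o[atTop] fun N : ℕ => (N : ℝ) ^ (-(2 * κ)))
    {a : ℝ} (hsum : Summable fun N : ℕ => Real.exp (-a * (N * p N)))
    {Ω : Type*} [MeasurableSpace Ω] {P : Measure Ω} {E : Ω → (n : ℕ) → Fin n → Bool}
    (hlaw : ∀ n : ℕ, P.map (fun ω => E ω n) = bernMeasure n (p (2 * n))) :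
    ∀ᵐ ω ∂P,
      Tendsto
        (fun n : ℕ => dilMagDist n (α (2 * n)) β (E ω n) {x | ¬ memTyp mp κ (2 * n) x})
        atTop (𝓝 0) := by
  have htwo : Function.Injective fun n : ℕ => 2 * n := mul_right_injective₀ two_ne_zero
  have hsum' : Summable fun n : ℕ => Real.exp (-(2 * a) * (n * p (2 * n))) := by
    refine (hsum.comp_injective htwo).congr fun n => ?_
    simp only [Function.comp_apply]
    push_cast
    ring_nf
  filter_upwards [ae_eventually_openCount_le (fun n => hp (2 * n)) hlaw hsum'] with ω hω
  refine tendsto_dilMagDist_not_memTyp hβ hκ hmp ?_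
  have hcount : (fun n => openCount (E ω n)) =O[atTop] fun n : ℕ => n * p (2 * n) := by
    refine .of_bound (2 * a + Real.exp 1 - 1) (hω.mono fun n hn => ?_)
    rwa [Real.norm_of_nonneg (openCount_nonneg _),
      Real.norm_of_nonneg (mul_nonneg n.cast_nonneg (hp _).1)]
  calc (fun n => α (2 * n) * openCount (E ω n))
      =O[atTop] fun n : ℕ => n * (α (2 * n) * p (2 * n)) := by
        simpa only [mul_left_comm] using (isBigO_refl (fun n => α (2 * n)) atTop).mul hcount
    _ =o[atTop] fun n : ℕ => n * ((2 * n : ℕ) : ℝ) ^ (-(2 * κ)) :=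
        (isBigO_refl _ _).mul_isLittleO
          (hαp.comp_tendsto (tendsto_id.const_mul_atTop' two_pos))
    _ =O[atTop] fun n : ℕ => (n : ℝ) ^ (1 - 2 * κ) := by
        refine .of_bound (2 ^ (-(2 * κ))) ((eventually_gt_atTop 0).mono fun n hn => ?_)
        have hn' : (0 : ℝ) < n := by exact_mod_cast hn
        rw [Nat.cast_mul, Nat.cast_ofNat, Real.mul_rpow two_pos.le hn'.le, sub_eq_add_neg,
          Real.rpow_add hn', Real.rpow_one, Real.norm_of_nonneg (by positivity),
          Real.norm_of_nonneg (by positivity)]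
        exact (mul_left_comm _ _ _).le

/-- Proposition 4.1(2): for `β > 2`, `α_N p(N) = N^{−ρ}` with `ρ > 0`, `2κ < ρ` and
`0 < κ < 1/2`, if there is `δ ∈ (0,1)` with `∑_N exp(−(δ²/6) N p(N)) < ∞`, then for
`P`-almost every realization of the dilution variables,
`μ^ε_{N,α_N,β}((m₁,m₂) ∉ A_κ^N) → 0` as `N → ∞` through even integers. -/
theorem diluted_concentration_almost_surely (β ρ κ : ℝ) (hβ : 2 < β) (hρ : 0 < ρ)
    (hκ0 : 0 < κ) (hκhalf : κ < 1 / 2) (hκρ : 2 * κ < ρ)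
    (mp : ℝ) (hfix : mp = Real.tanh (β / 2 * mp))
    (hmax : ∀ z : ℝ, z = Real.tanh (β / 2 * z) → z ≤ mp)
    (α p : ℕ → ℝ) (hp : ∀ N, p N ∈ Set.Ioc (0 : ℝ) 1)
    (hαp : ∀ N : ℕ, 1 ≤ N → α N * p N = (N : ℝ) ^ (-ρ))
    (hsum : ∃ δ : ℝ, δ ∈ Set.Ioo (0 : ℝ) 1 ∧
      Summable fun N : ℕ => Real.exp (-(δ ^ 2 / 6) * ((N : ℝ) * p N)))
    (Ω : Type) [MeasurableSpace Ω] (P : Measure Ω) [IsProbabilityMeasure P]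
    (E : Ω → (n : ℕ) → Fin n → Bool)
    (hlaw : ∀ n : ℕ, Measure.map (fun ω => E ω n) P = bernMeasure n (p (2 * n))) :
    ∀ᵐ ω ∂P,
      Tendsto
        (fun n : ℕ =>
          dilMagDist n (α (2 * n)) β (E ω n) {x : ℝ × ℝ | ¬ memTyp mp κ (2 * n) x})
        atTop (nhds (0 : ENNReal)) := by
  obtain ⟨δ, -, hsum⟩ := hsum
  refine diluted_concentration_almost_surely_general hβ hκhalf ⟨hfix, fun z => hmax z⟩
    (fun N => Ioc_subset_Icc_self (hp N)) ?_ hsum hlaw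
  exact EventuallyEq.trans_isLittleO ((eventually_ge_atTop 1).mono hαp)
    ((isLittleO_rpow_rpow (neg_lt_neg hκρ)).comp_tendsto tendsto_natCast_atTop_atTop)

end
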